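/- arXiv:alg-geom/9601012 — 3 statements merged into one kernel-verified Lean document; each statement's English description precedes it below -/
import Mathlib

section
/- Let A = [[X, α],[β, Y]] be an even (k|l)-supermatrix over Λ such that both X and Y are invertible. Then det(X − α·Y⁻¹·β)·det(Y − β·X⁻¹·α) = det(X)·det(Y). Equivalently, ber(A) is an invertible element of Λ₀ and ber*(A) = ber(A)⁻¹. -/
/-!
Statement 2: For an even (k|l)-supermatrix `A = [[X, α],[β, Y]]` over the exterior algebra
`Λ = ⋀ ℂⁿ` with `X` and `Y` invertible, one has
`det(X − α·Y⁻¹·β)·det(Y − β·X⁻¹·α) = det(X)·det(Y)`; equivalently `ber(A)` is an invertible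
element of `Λ₀` and `ber*(A) = ber(A)⁻¹`.

Since the relevant matrices have entries in the (central, commutative) even part `Λ₀` of the
noncommutative ring `Λ`, the determinant is formalized by the Leibniz formula `ncdet`, with the
products taken in the canonical order of the index set.
-/

noncomputable section

open ExteriorAlgebra

/-- `Λ n`: the exterior algebra of `ℂⁿ` (with its `n` odd generators `βᵢ`). -/
abbrev SuperAlg (n : ℕ) : Type := ExteriorAlgebra ℂ (Fin n → ℂ)

/-- The even part `Λ₀` of the exterior algebra, i.e. the degree-`0̄` part of its `ℤ₂`-grading. -/
def evenPart (n : ℕ) : Submodule ℂ (SuperAlg n) :=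
  CliffordAlgebra.evenOdd (0 : QuadraticForm ℂ (Fin n → ℂ)) 0

/-- The odd part `Λ₁` of the exterior algebra, i.e. the degree-`1̄` part of its `ℤ₂`-grading. -/
def oddPart (n : ℕ) : Submodule ℂ (SuperAlg n) :=
  CliffordAlgebra.evenOdd (0 : QuadraticForm ℂ (Fin n → ℂ)) 1

/-- The determinant of a square matrix over a (possibly noncommutative) ring, given by the
Leibniz formula, the product over each permutation being taken in the canonical order of the
index set.  For matrices whose entries lie in a central commutative subring (such as `Λ₀ ⊆ Λ`)
this is the usual determinant. -/
def ncdet {R : Type*} [Ring R] {k : ℕ} (M : Matrix (Fin k) (Fin k) R) : R :=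
  ∑ σ : Equiv.Perm (Fin k), ((Equiv.Perm.sign σ : ℤˣ) : ℤ) • (List.ofFn fun i => M (σ i) i).prod

/-- The even-even block `X` of a `(k|l)`-block matrix. -/
def Xblk (n k l : ℕ) (A : Matrix (Fin (k + l)) (Fin (k + l)) (SuperAlg n)) :
    Matrix (Fin k) (Fin k) (SuperAlg n) :=
  fun i j => A (Fin.castAdd l i) (Fin.castAdd l j)

/-- The even-odd block `α` of a `(k|l)`-block matrix. -/
def alphaBlk (n k l : ℕ) (A : Matrix (Fin (k + l)) (Fin (k + l)) (SuperAlg n)) :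
    Matrix (Fin k) (Fin l) (SuperAlg n) :=
  fun i j => A (Fin.castAdd l i) (Fin.natAdd k j)

/-- The odd-even block `β` of a `(k|l)`-block matrix. -/
def betaBlk (n k l : ℕ) (A : Matrix (Fin (k + l)) (Fin (k + l)) (SuperAlg n)) :
    Matrix (Fin l) (Fin k) (SuperAlg n) :=
  fun i j => A (Fin.natAdd k i) (Fin.castAdd l j)

/-- The odd-odd block `Y` of a `(k|l)`-block matrix. -/
def Yblk (n k l : ℕ) (A : Matrix (Fin (k + l)) (Fin (k + l)) (SuperAlg n)) :
    Matrix (Fin l) (Fin l) (SuperAlg n) :=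
  fun i j => A (Fin.natAdd k i) (Fin.natAdd k j)

/-- `A` is an even `(k|l)`-supermatrix: the diagonal blocks `X`, `Y` have entries in `Λ₀` and
the off-diagonal blocks `α`, `β` have entries in `Λ₁`. -/
def IsEvenSupermatrix (n k l : ℕ) (A : Matrix (Fin (k + l)) (Fin (k + l)) (SuperAlg n)) : Prop :=
  (∀ i j, Xblk n k l A i j ∈ evenPart n) ∧ (∀ i j, Yblk n k l A i j ∈ evenPart n) ∧
  (∀ i j, alphaBlk n k l A i j ∈ oddPart n) ∧ (∀ i j, betaBlk n k l A i j ∈ oddPart n)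

/-- The Berezinian `ber(A) = det(X − α·Y⁻¹·β)·det(Y)⁻¹` (defined when `Y` is invertible). -/
def ber (n k l : ℕ) (A : Matrix (Fin (k + l)) (Fin (k + l)) (SuperAlg n)) : SuperAlg n :=
  ncdet (Xblk n k l A - alphaBlk n k l A * Ring.inverse (Yblk n k l A) * betaBlk n k l A) *
    Ring.inverse (ncdet (Yblk n k l A))

/-- The inverse Berezinian `ber*(A) = det(X)⁻¹·det(Y − β·X⁻¹·α)` (defined when `X` is
invertible). -/
def berStar (n k l : ℕ) (A : Matrix (Fin (k + l)) (Fin (k + l)) (SuperAlg n)) : SuperAlg n :=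
  Ring.inverse (ncdet (Xblk n k l A)) *
    ncdet (Yblk n k l A - betaBlk n k l A * Ring.inverse (Xblk n k l A) * alphaBlk n k l A)

/-!
With the odd matrices `a = X⁻¹ α` and `c = Y⁻¹ β`, the two matrices under the determinants factor as
`X - α Y⁻¹ β = X (1 - a c)` and `Y - β X⁻¹ α = Y (1 - c a)`, so everything reduces to
`det (1 - a c) * det (1 - c a) = 1`. For `1 × 1` matrices this is `(1 - x y) (1 - y x) = 1`, which
holds because odd elements anticommute and square to zero. If the columns of `a` and the rows of `c`
are split as `a = (a₁ a₂)` and `c = (c₁; c₂)`, put `W = (1 - a₁ c₁)⁻¹`; then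
`1 - a c = (1 - a₁ c₁) (1 - W a₂ c₂)`, while the Schur complement of `1 - c₁ a₁` in `1 - c a` is
`1 - c₂ W a₂`. The identity for `(a, c)` thus follows from those for `(a₁, c₁)` and `(W a₂, c₂)`.
Splitting off one column at a time reduces to a single column, and exchanging the roles of `a` and
`c` then reduces to the `1 × 1` case.
-/

section GradedMatrix

variable {ι R σ : Type*} [Ring R] [SetLike σ R]
variable {m p q : Type*}

/-- All entries of the matrix `M` are homogeneous of the same degree `i` for the grading `𝒜`. -/
def IsHomogeneousMatrix (𝒜 : ι → σ) (i : ι) (M : Matrix m p R) : Prop :=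
  ∀ s t, M s t ∈ 𝒜 i

variable [AddSubgroupClass σ R] {𝒜 : ι → σ}

namespace IsHomogeneousMatrix

theorem sub {i : ι} {M N : Matrix m p R} (hM : IsHomogeneousMatrix 𝒜 i M)
    (hN : IsHomogeneousMatrix 𝒜 i N) : IsHomogeneousMatrix 𝒜 i (M - N) :=
  fun s t => sub_mem (hM s t) (hN s t)

theorem neg {i : ι} {M : Matrix m p R} (hM : IsHomogeneousMatrix 𝒜 i M) :
    IsHomogeneousMatrix 𝒜 i (-M) :=
  fun s t => neg_mem (hM s t)

theorem add {i : ι} {M N : Matrix m p R} (hM : IsHomogeneousMatrix 𝒜 i M)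
    (hN : IsHomogeneousMatrix 𝒜 i N) : IsHomogeneousMatrix 𝒜 i (M + N) :=
  fun s t => add_mem (hM s t) (hN s t)

variable [AddMonoid ι] [SetLike.GradedMonoid 𝒜]

theorem one [DecidableEq m] : IsHomogeneousMatrix 𝒜 0 (1 : Matrix m m R) := by
  intro s t
  rw [Matrix.one_apply]
  split_ifs
  exacts [SetLike.one_mem_graded 𝒜, zero_mem _]

theorem mul [Fintype p] {i j : ι} {M : Matrix m p R} {N : Matrix p q R}
    (hM : IsHomogeneousMatrix 𝒜 i M) (hN : IsHomogeneousMatrix 𝒜 j N) :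
    IsHomogeneousMatrix 𝒜 (i + j) (M * N) :=
  fun s t => sum_mem fun x _ => SetLike.mul_mem_graded (hM s x) (hN x t)

end IsHomogeneousMatrix

variable [DecidableEq ι] [AddMonoid ι] [GradedRing 𝒜]

variable (𝒜) in
/-- The entrywise degree-zero component of a matrix over a graded ring, as a matrix over the ring
`𝒜 0`. Being total, it transfers matrices of degree zero to `𝒜 0` without carrying a proof that
their entries lie there. -/
def zeroComponent (M : Matrix m p R) : Matrix m p (𝒜 0) :=
  M.map fun x => DirectSum.decompose 𝒜 x 0

theorem coe_zeroComponent_apply {M : Matrix m p R} (hM : IsHomogeneousMatrix 𝒜 0 M) (s : m)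
    (t : p) : (zeroComponent 𝒜 M s t : R) = M s t :=
  DirectSum.decompose_of_mem_same 𝒜 (hM s t)

variable (𝒜) in
/-- The inclusion of the degree-zero subring of a graded ring. -/
def zeroInclusion : 𝒜 0 →+* R :=
  (SetLike.GradeZero.subring 𝒜).subtype

theorem map_zeroInclusion_zeroComponent {M : Matrix m p R} (hM : IsHomogeneousMatrix 𝒜 0 M) :
    (zeroComponent 𝒜 M).map (zeroInclusion 𝒜) = M :=
  Matrix.ext (coe_zeroComponent_apply hM)

theorem isHomogeneousMatrix_map_zeroInclusion (M : Matrix m p (𝒜 0)) :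
    IsHomogeneousMatrix 𝒜 0 (M.map (zeroInclusion 𝒜)) :=
  fun s t => (M s t).2

variable (𝒜) in
theorem zeroComponent_one [DecidableEq m] : zeroComponent 𝒜 (1 : Matrix m m R) = 1 :=
  Matrix.map_one _ (by rw [DirectSum.decompose_zero, DirectSum.zero_apply])
    (Subtype.ext (DirectSum.decompose_of_mem_same 𝒜 (SetLike.one_mem_graded 𝒜)))

variable (𝒜) in
theorem zeroComponent_zero : zeroComponent 𝒜 (0 : Matrix m p R) = 0 :=
  Matrix.map_zero _ (by rw [DirectSum.decompose_zero, DirectSum.zero_apply])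

variable (𝒜) in
theorem zeroComponent_fromBlocks {r : Type*} (A : Matrix m p R) (B : Matrix m q R)
    (C : Matrix r p R) (D : Matrix r q R) :
    zeroComponent 𝒜 (Matrix.fromBlocks A B C D) =
      Matrix.fromBlocks (zeroComponent 𝒜 A) (zeroComponent 𝒜 B) (zeroComponent 𝒜 C)
        (zeroComponent 𝒜 D) :=
  Matrix.fromBlocks_map A B C D _

theorem zeroComponent_mul [Fintype p] {M : Matrix m p R} (hM : IsHomogeneousMatrix 𝒜 0 M)
    (N : Matrix p q R) :
    zeroComponent 𝒜 (M * N) = zeroComponent 𝒜 M * zeroComponent 𝒜 N := by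
  ext s t
  calc GradedRing.proj 𝒜 0 (∑ x, M s x * N x t)
      = ∑ x, GradedRing.proj 𝒜 0 (M s x * N x t) := map_sum _ _ _
    _ = ∑ x, (zeroComponent 𝒜 M s x : R) * zeroComponent 𝒜 N x t := by
        simp only [coe_zeroComponent_apply hM]
        exact Finset.sum_congr rfl fun x _ =>
          DirectSum.coe_decompose_mul_of_left_mem_zero 𝒜 (hM s x)
    _ = ((zeroComponent 𝒜 M * zeroComponent 𝒜 N) s t : 𝒜 0) := by
        simp only [Matrix.mul_apply, AddSubmonoidClass.coe_finsetSum, SetLike.GradeZero.coe_mul]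

/-- A left factor of degree zero commutes with taking degree-zero components, so the degree-zero
component of the inverse is again an inverse. -/
theorem ringInverse_mem_zero {x : R} (hx : x ∈ 𝒜 0) (hu : IsUnit x) : Ring.inverse x ∈ 𝒜 0 := by
  have component_inverse : x * DirectSum.decompose 𝒜 (Ring.inverse x) 0 = 1 := by
    rw [← DirectSum.coe_decompose_mul_of_left_mem_zero 𝒜 hx, Ring.mul_inverse_cancel x hu,
      DirectSum.decompose_of_mem_same 𝒜 (SetLike.one_mem_graded 𝒜)]
  rw [← hu.mul_left_cancel (component_inverse.trans (Ring.mul_inverse_cancel x hu).symm)]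
  exact SetLike.coe_mem _

theorem IsHomogeneousMatrix.ringInverse [Fintype m] [DecidableEq m] {M : Matrix m m R}
    (hM : IsHomogeneousMatrix 𝒜 0 M) (hu : IsUnit M) :
    IsHomogeneousMatrix 𝒜 0 (Ring.inverse M) := by
  have component_inverse : M * (zeroComponent 𝒜 (Ring.inverse M)).map (zeroInclusion 𝒜) = 1 := by
    nth_rw 1 [← map_zeroInclusion_zeroComponent hM]
    rw [← Matrix.map_mul, ← zeroComponent_mul hM, Ring.mul_inverse_cancel M hu,
      map_zeroInclusion_zeroComponent .one]
  rw [← hu.mul_left_cancel (component_inverse.trans (Ring.mul_inverse_cancel M hu).symm)]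
  exact isHomogeneousMatrix_map_zeroInclusion _

end GradedMatrix

section Ring

theorem ncdet_map {R S : Type*} [Ring R] [CommRing S] (φ : S →+* R) {k : ℕ}
    (M : Matrix (Fin k) (Fin k) S) : ncdet (M.map φ) = φ M.det := by
  rw [ncdet, Matrix.det_apply, map_sum]
  refine Finset.sum_congr rfl fun σ _ => ?_
  rw [← List.prod_ofFn, Units.smul_def, map_zsmul, map_list_prod, List.map_ofFn]
  rfl

variable {R : Type*} [Ring R]

theorem ringInverse_mul_eq_ringInverse_mul_ringInverse {x y z w : R} (hx : IsUnit x)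
    (hy : IsUnit y) (hz : IsUnit z) (h : w * z = x * y) :
    Ring.inverse x * w = Ring.inverse (z * Ring.inverse y) := by
  rw [Ring.inverse_mul (.inl hz), Ring.inverse_inverse hy, Ring.inverse_mul_eq_iff_eq_mul _ _ _ hx,
    ← mul_assoc, Ring.eq_mul_inverse_iff_mul_eq _ _ _ hz, h]

theorem one_sub_fromRows_mul_fromCols {m p q : Type*} [Fintype m] [DecidableEq p] [DecidableEq q]
    (a₁ : Matrix m p R) (a₂ : Matrix m q R) (c₁ : Matrix p m R) (c₂ : Matrix q m R) :
    1 - Matrix.fromRows c₁ c₂ * Matrix.fromCols a₁ a₂ =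
      Matrix.fromBlocks (1 - c₁ * a₁) (-(c₁ * a₂)) (-(c₂ * a₁)) (1 - c₂ * a₂) := by
  rw [Matrix.fromRows_mul_fromCols, ← Matrix.fromBlocks_one, sub_eq_add_neg,
    Matrix.fromBlocks_neg, Matrix.fromBlocks_add]
  simp only [← sub_eq_add_neg, zero_sub]

variable {m p : Type*} [Fintype m] [Fintype p] [DecidableEq m]

theorem sub_mul_eq_mul_one_sub_of_isUnit {X : Matrix m m R} (hX : IsUnit X) (a : Matrix m p R)
    (c : Matrix p m R) : X - a * c = X * (1 - Ring.inverse X * a * c) := by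
  rw [Matrix.mul_sub, Matrix.mul_one, Matrix.mul_assoc, ← Matrix.mul_assoc X,
    Ring.mul_inverse_cancel X hX, Matrix.one_mul]

theorem one_sub_mul_mul_one_add_eq_one [DecidableEq p] {a : Matrix m p R} {c : Matrix p m R}
    {V : Matrix p p R} (hV : (1 - c * a) * V = 1) : (1 - a * c) * (1 + a * V * c) = 1 := by
  calc (1 - a * c) * (1 + a * V * c) = 1 - a * c + a * ((1 - c * a) * V) * c := by
        simp only [Matrix.sub_mul, Matrix.mul_sub, Matrix.mul_add, Matrix.one_mul, Matrix.mul_one,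
          Matrix.mul_assoc]
    _ = 1 := by rw [hV, Matrix.mul_one, sub_add_cancel]

theorem one_sub_fromCols_mul_fromRows_of_mul_eq_one {q : Type*} [Fintype q] {a₁ : Matrix m p R}
    {c₁ : Matrix p m R} {W : Matrix m m R} (hW : (1 - a₁ * c₁) * W = 1) (a₂ : Matrix m q R)
    (c₂ : Matrix q m R) :
    1 - Matrix.fromCols a₁ a₂ * Matrix.fromRows c₁ c₂ = (1 - a₁ * c₁) * (1 - W * a₂ * c₂) := by
  rw [Matrix.fromCols_mul_fromRows, Matrix.mul_sub, Matrix.mul_one, ← Matrix.mul_assoc,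
    ← Matrix.mul_assoc, hW, Matrix.one_mul, sub_sub]

theorem fromBlocks_eq_mul_of_mul_eq_one [DecidableEq p] {A A' : Matrix m m R} (hA : A * A' = 1)
    (B : Matrix m p R) (C : Matrix p m R) (D : Matrix p p R) :
    Matrix.fromBlocks A B C D =
      Matrix.fromBlocks A 0 C 1 * Matrix.fromBlocks 1 (A' * B) 0 (D - C * A' * B) := by
  simp [Matrix.fromBlocks_multiply, ← Matrix.mul_assoc, hA]

end Ring

/-- A `ℤ/2`-graded ring is (strictly) supercommutative if its even elements are central and its odd
elements square to zero. Odd elements then anticommute by polarization. -/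
class IsSupercommutative {R σ : Type*} [Ring R] [SetLike σ R] (𝒜 : ZMod 2 → σ) : Prop where
  commute_of_even {i : ZMod 2} {a b : R} : a ∈ 𝒜 0 → b ∈ 𝒜 i → Commute a b
  mul_self_of_odd {a : R} : a ∈ 𝒜 1 → a * a = 0

section ExteriorAlgebra

variable {K M : Type*} [CommRing K] [AddCommGroup M] [Module K M]

theorem isOrtho_isometryId_zero (x y : M) :
    QuadraticMap.IsOrtho (0 : QuadraticForm K M)
      (QuadraticMap.Isometry.id (0 : QuadraticForm K M) x)
      (QuadraticMap.Isometry.id (0 : QuadraticForm K M) y) := by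
  simp [QuadraticMap.IsOrtho]

open CliffordAlgebra in
theorem commute_of_mem_evenOdd_zero {i : ZMod 2} {x y : ExteriorAlgebra K M}
    (hx : x ∈ evenOdd (0 : QuadraticForm K M) 0) (hy : y ∈ evenOdd (0 : QuadraticForm K M) i) :
    Commute x y := by
  simpa using commute_map_mul_map_of_isOrtho_of_mem_evenOdd_zero_left _ _
    isOrtho_isometryId_zero x y hx hy

open CliffordAlgebra in
theorem mul_eq_neg_mul_of_mem_evenOdd_one {x y : ExteriorAlgebra K M}
    (hx : x ∈ evenOdd (0 : QuadraticForm K M) 1) (hy : y ∈ evenOdd (0 : QuadraticForm K M) 1) :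
    x * y = -(y * x) := by
  simpa using map_mul_map_eq_neg_of_isOrtho_of_mem_evenOdd_one _ _
    isOrtho_isometryId_zero x y hx hy

open CliffordAlgebra in
theorem mul_self_of_mem_evenOdd_one {x : ExteriorAlgebra K M}
    (hx : x ∈ evenOdd (0 : QuadraticForm K M) 1) : x * x = 0 := by
  induction x, hx using odd_induction with
  | ι v => exact ι_sq_zero v
  | add x y hx hy ihx ihy =>
    rw [add_mul, mul_add, mul_add, ihx, ihy, mul_eq_neg_mul_of_mem_evenOdd_one hx hy]
    simp
  | ι_mul_ι_mul v w x hx ih =>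
    have comm := commute_of_mem_evenOdd_zero (ι_mul_ι_mem_evenOdd_zero _ v w) hx
    rw [comm.symm.mul_mul_mul_comm, ih, mul_zero]

instance : IsSupercommutative (CliffordAlgebra.evenOdd (0 : QuadraticForm K M)) where
  commute_of_even := commute_of_mem_evenOdd_zero
  mul_self_of_odd := mul_self_of_mem_evenOdd_one

end ExteriorAlgebra

section Supercommutative

variable {R σ : Type*} [Ring R] [SetLike σ R] [AddSubgroupClass σ R] {𝒜 : ZMod 2 → σ}

theorem IsHomogeneousMatrix.one_sub_mul [GradedRing 𝒜] {m p : Type*} [DecidableEq m] [Fintype p]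
    {a : Matrix m p R} {c : Matrix p m R} (ha : IsHomogeneousMatrix 𝒜 1 a)
    (hc : IsHomogeneousMatrix 𝒜 1 c) : IsHomogeneousMatrix 𝒜 0 (1 - a * c) :=
  one.sub (ha.mul hc)

theorem IsHomogeneousMatrix.sub_mul_ringInverse_mul [GradedRing 𝒜] {m p : Type*} [Fintype p]
    [DecidableEq p] {X : Matrix m m R} {α : Matrix m p R} {β : Matrix p m R} {Y : Matrix p p R}
    (hX_even : IsHomogeneousMatrix 𝒜 0 X) (hα : IsHomogeneousMatrix 𝒜 1 α)
    (hβ : IsHomogeneousMatrix 𝒜 1 β) (hY_even : IsHomogeneousMatrix 𝒜 0 Y) (hY : IsUnit Y) :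
    IsHomogeneousMatrix 𝒜 0 (X - α * Ring.inverse Y * β) :=
  hX_even.sub ((hα.mul (hY_even.ringInverse hY)).mul hβ)

variable [IsSupercommutative 𝒜]

theorem add_mul_swap_eq_zero_of_odd {a b : R} (ha : a ∈ 𝒜 1) (hb : b ∈ 𝒜 1) :
    a * b + b * a = 0 := by
  have sq_add := IsSupercommutative.mul_self_of_odd (add_mem ha hb)
  simpa [add_mul, mul_add, IsSupercommutative.mul_self_of_odd ha,
    IsSupercommutative.mul_self_of_odd hb, add_comm] using sq_add

variable [GradedRing 𝒜]

instance evenCommRing : CommRing (𝒜 0) where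
  __ := SetLike.GradeZero.instRing 𝒜
  mul_comm a b := Subtype.ext (IsSupercommutative.commute_of_even a.2 b.2)

variable {m p q : Type*} [Fintype m] [DecidableEq m] [Fintype p] [DecidableEq p]
  [Fintype q] [DecidableEq q]

variable (𝒜) in
/-- The determinant, in the commutative ring `𝒜 0`, of the even component of a square matrix. For
a matrix with even entries it is the usual determinant. -/
def evenDet (M : Matrix m m R) : 𝒜 0 :=
  (zeroComponent 𝒜 M).det

theorem ncdet_eq_coe_evenDet {k : ℕ} {M : Matrix (Fin k) (Fin k) R}
    (hM : IsHomogeneousMatrix 𝒜 0 M) : ncdet M = evenDet 𝒜 M := by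
  nth_rw 1 [← map_zeroInclusion_zeroComponent hM]
  exact ncdet_map (zeroInclusion 𝒜) _

variable (𝒜) in
theorem evenDet_one : evenDet 𝒜 (1 : Matrix m m R) = 1 := by
  rw [evenDet, zeroComponent_one, Matrix.det_one]

theorem evenDet_mul {M : Matrix m m R} (hM : IsHomogeneousMatrix 𝒜 0 M) (N : Matrix m m R) :
    evenDet 𝒜 (M * N) = evenDet 𝒜 M * evenDet 𝒜 N := by
  simp only [evenDet, zeroComponent_mul hM, Matrix.det_mul]

theorem evenDet_submatrix_equiv_self (e : p ≃ m) (M : Matrix m m R) :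
    evenDet 𝒜 (M.submatrix e e) = evenDet 𝒜 M :=
  Matrix.det_submatrix_equiv_self e (zeroComponent 𝒜 M)

theorem isUnit_evenDet {M : Matrix m m R} (hM : IsHomogeneousMatrix 𝒜 0 M) (hu : IsUnit M) :
    IsUnit (evenDet 𝒜 M) :=
  .of_mul_eq_one (evenDet 𝒜 (Ring.inverse M)) <| by
    rw [← evenDet_mul hM, Ring.mul_inverse_cancel M hu, evenDet_one]

theorem coe_evenDet_unique [Unique m] {M : Matrix m m R} (hM : IsHomogeneousMatrix 𝒜 0 M) :
    (evenDet 𝒜 M : R) = M default default := by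
  rw [evenDet, Matrix.det_unique, coe_zeroComponent_apply hM]

theorem exists_mul_eq_one_of_isUnit_evenDet {M : Matrix m m R} (hM : IsHomogeneousMatrix 𝒜 0 M)
    (hu : IsUnit (evenDet 𝒜 M)) : ∃ N, IsHomogeneousMatrix 𝒜 0 N ∧ M * N = 1 := by
  refine ⟨(zeroComponent 𝒜 M)⁻¹.map (zeroInclusion 𝒜),
    isHomogeneousMatrix_map_zeroInclusion _, ?_⟩
  nth_rw 1 [← map_zeroInclusion_zeroComponent hM]
  rw [← Matrix.map_mul, Matrix.mul_nonsing_inv _ hu]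
  simp

theorem evenDet_fromBlocks_of_mul_eq_one {A A' : Matrix m m R} (hA : IsHomogeneousMatrix 𝒜 0 A)
    (hA' : A * A' = 1) (B : Matrix m p R) {C : Matrix p m R} (hC : IsHomogeneousMatrix 𝒜 0 C)
    (D : Matrix p p R) :
    evenDet 𝒜 (Matrix.fromBlocks A B C D) = evenDet 𝒜 A * evenDet 𝒜 (D - C * A' * B) := by
  have lower_even : IsHomogeneousMatrix 𝒜 0 (Matrix.fromBlocks A 0 C (1 : Matrix p p R)) := by
    rintro (s | s) (t | t)
    exacts [hA s t, zero_mem _, hC s t, IsHomogeneousMatrix.one s t]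
  rw [fromBlocks_eq_mul_of_mul_eq_one hA', evenDet_mul lower_even]
  simp only [evenDet, zeroComponent_fromBlocks, zeroComponent_zero, zeroComponent_one,
    Matrix.det_fromBlocks_zero₁₂, Matrix.det_fromBlocks_zero₂₁, Matrix.det_one, mul_one, one_mul]

variable (𝒜) in
/-- The super analogue of the Weinstein–Aronszajn identity `det (1 - a c) = det (1 - c a)` for odd
matrices `a` and `c` of the shapes `m × p` and `p × m`: the two determinants are now inverse to
each other. -/
def OddDetDuality (m p : Type*) [Fintype m] [DecidableEq m] [Fintype p] [DecidableEq p] : Prop :=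
  ∀ (a : Matrix m p R) (c : Matrix p m R), IsHomogeneousMatrix 𝒜 1 a → IsHomogeneousMatrix 𝒜 1 c →
    evenDet 𝒜 (1 - a * c) * evenDet 𝒜 (1 - c * a) = 1

namespace OddDetDuality

theorem symm (h : OddDetDuality 𝒜 m p) : OddDetDuality 𝒜 p m := fun a c ha hc => by
  rw [mul_comm]
  exact h c a hc ha

theorem of_equiv (h : OddDetDuality 𝒜 m p) (e : p ≃ q) : OddDetDuality 𝒜 m q := by
  intro a c ha hc
  have dual := h (a.submatrix id e) (c.submatrix e id) (fun s t => ha s (e t)) fun s t => hc (e s) t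
  have submatrix_one_sub : (1 - c * a).submatrix e e = 1 - c.submatrix e id * a.submatrix id e := by
    rw [← Matrix.submatrix_mul c a e id e Function.bijective_id, ← Matrix.submatrix_one_equiv e]
    rfl
  rwa [Matrix.submatrix_mul_equiv, Matrix.submatrix_id_id, ← submatrix_one_sub,
    evenDet_submatrix_equiv_self] at dual

variable (𝒜 m p) in
theorem of_isEmpty [IsEmpty p] : OddDetDuality 𝒜 m p := by
  intro a c _ _
  have mul_eq_zero : a * c = 0 := by
    ext s t
    simp [Matrix.mul_apply]
  rw [mul_eq_zero, sub_zero, evenDet_one, one_mul, evenDet, Matrix.det_isEmpty]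

theorem of_unique [Unique m] [Unique p] : OddDetDuality 𝒜 m p := by
  intro a c ha hc
  let x := a default default
  let y := c default default
  have hx : x ∈ 𝒜 1 := ha default default
  have hy : y ∈ 𝒜 1 := hc default default
  have det_one_sub_mul : (evenDet 𝒜 (1 - a * c) : R) = 1 - x * y := by
    simp [coe_evenDet_unique (ha.one_sub_mul hc), Matrix.mul_apply, x, y]
  have det_one_sub_mul_swap : (evenDet 𝒜 (1 - c * a) : R) = 1 - y * x := by
    simp [coe_evenDet_unique (hc.one_sub_mul ha), Matrix.mul_apply, x, y]
  apply Subtype.ext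
  calc (evenDet 𝒜 (1 - a * c) * evenDet 𝒜 (1 - c * a) : R)
      = 1 - (x * y + y * x) + x * (y * y) * x := by
        rw [det_one_sub_mul, det_one_sub_mul_swap]
        noncomm_ring
    _ = 1 := by
        rw [add_mul_swap_eq_zero_of_odd hx hy, IsSupercommutative.mul_self_of_odd hy]
        simp

theorem sum (hp : OddDetDuality 𝒜 m p) (hq : OddDetDuality 𝒜 m q) :
    OddDetDuality 𝒜 m (p ⊕ q) := by
  intro a c ha hc
  obtain ⟨a₁, a₂, rfl⟩ : ∃ a₁ a₂, a = Matrix.fromCols a₁ a₂ :=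
    ⟨_, _, (Matrix.fromCols_toCols a).symm⟩
  obtain ⟨c₁, c₂, rfl⟩ : ∃ c₁ c₂, c = Matrix.fromRows c₁ c₂ :=
    ⟨_, _, (Matrix.fromRows_toRows c).symm⟩
  have ha₁ : IsHomogeneousMatrix 𝒜 1 a₁ := fun s t => ha s (.inl t)
  have ha₂ : IsHomogeneousMatrix 𝒜 1 a₂ := fun s t => ha s (.inr t)
  have hc₁ : IsHomogeneousMatrix 𝒜 1 c₁ := fun s t => hc (.inl s) t
  have hc₂ : IsHomogeneousMatrix 𝒜 1 c₂ := fun s t => hc (.inr s) t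
  have dual₁ := hp a₁ c₁ ha₁ hc₁
  obtain ⟨V, hV, mul_V⟩ := exists_mul_eq_one_of_isUnit_evenDet (hc₁.one_sub_mul ha₁)
    (.of_mul_eq_one_right _ dual₁)
  have mul_W := one_sub_mul_mul_one_add_eq_one mul_V
  set W := 1 + a₁ * V * c₁
  have ha₂' : IsHomogeneousMatrix 𝒜 1 (W * a₂) :=
    (IsHomogeneousMatrix.one.add ((ha₁.mul hV).mul hc₁)).mul ha₂
  have dual₂ := hq (W * a₂) c₂ ha₂' hc₂
  have neg_even : IsHomogeneousMatrix 𝒜 0 (-(c₂ * a₁)) := (hc₂.mul ha₁).neg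
  have schur_complement :
      1 - c₂ * a₂ - -(c₂ * a₁) * V * -(c₁ * a₂) = 1 - c₂ * (W * a₂) := by
    simp [W, Matrix.mul_add, Matrix.add_mul, Matrix.mul_assoc, sub_sub]
  rw [one_sub_fromCols_mul_fromRows_of_mul_eq_one mul_W, one_sub_fromRows_mul_fromCols,
    evenDet_mul (ha₁.one_sub_mul hc₁),
    evenDet_fromBlocks_of_mul_eq_one (hc₁.one_sub_mul ha₁) mul_V _ neg_even, schur_complement,
    mul_mul_mul_comm, dual₁, dual₂, one_mul]

theorem of_unit_right (h : OddDetDuality 𝒜 m Unit) : OddDetDuality 𝒜 m p := by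
  classical
  suffices ∀ [DecidableEq p], OddDetDuality 𝒜 m p from this
  refine Fintype.induction_empty_option (P := fun p _ => ∀ [DecidableEq p], OddDetDuality 𝒜 m p)
    ?of_equiv ?empty ?option p
  case of_equiv =>
    intro α β _ e hα _
    let := Fintype.ofEquiv β e.symm
    exact hα.of_equiv e
  case empty => exact of_isEmpty 𝒜 m PEmpty
  case option =>
    intro α _ hα _
    exact (hα.sum h).of_equiv (Equiv.optionEquivSumPUnit α).symm

end OddDetDuality

theorem evenDet_one_sub_mul_mul_evenDet_one_sub_mul_swap {a : Matrix m p R} {c : Matrix p m R}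
    (ha : IsHomogeneousMatrix 𝒜 1 a) (hc : IsHomogeneousMatrix 𝒜 1 c) :
    evenDet 𝒜 (1 - a * c) * evenDet 𝒜 (1 - c * a) = 1 :=
  have column : OddDetDuality 𝒜 m Unit := OddDetDuality.of_unique.of_unit_right.symm
  column.of_unit_right a c ha hc

theorem evenDet_schurComplement_mul_evenDet_schurComplement {X : Matrix m m R} {α : Matrix m p R}
    {β : Matrix p m R} {Y : Matrix p p R} (hX_even : IsHomogeneousMatrix 𝒜 0 X)
    (hα : IsHomogeneousMatrix 𝒜 1 α) (hβ : IsHomogeneousMatrix 𝒜 1 β)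
    (hY_even : IsHomogeneousMatrix 𝒜 0 Y) (hX : IsUnit X) (hY : IsUnit Y) :
    evenDet 𝒜 (X - α * Ring.inverse Y * β) * evenDet 𝒜 (Y - β * Ring.inverse X * α) =
      evenDet 𝒜 X * evenDet 𝒜 Y := by
  have ha : IsHomogeneousMatrix 𝒜 1 (Ring.inverse X * α) := (hX_even.ringInverse hX).mul hα
  have hc : IsHomogeneousMatrix 𝒜 1 (Ring.inverse Y * β) := (hY_even.ringInverse hY).mul hβ
  rw [Matrix.mul_assoc α, Matrix.mul_assoc β, sub_mul_eq_mul_one_sub_of_isUnit hX,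
    sub_mul_eq_mul_one_sub_of_isUnit hY, evenDet_mul hX_even, evenDet_mul hY_even,
    mul_mul_mul_comm, evenDet_one_sub_mul_mul_evenDet_one_sub_mul_swap ha hc, mul_one]

theorem statement2_general {k l : ℕ} {X : Matrix (Fin k) (Fin k) R} {α : Matrix (Fin k) (Fin l) R}
    {β : Matrix (Fin l) (Fin k) R} {Y : Matrix (Fin l) (Fin l) R}
    (hX_even : IsHomogeneousMatrix 𝒜 0 X) (hα : IsHomogeneousMatrix 𝒜 1 α)
    (hβ : IsHomogeneousMatrix 𝒜 1 β) (hY_even : IsHomogeneousMatrix 𝒜 0 Y)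
    (hX : IsUnit X) (hY : IsUnit Y) :
    ncdet (X - α * Ring.inverse Y * β) * ncdet (Y - β * Ring.inverse X * α) =
        ncdet X * ncdet Y ∧
      ncdet (X - α * Ring.inverse Y * β) * Ring.inverse (ncdet Y) ∈ 𝒜 0 ∧
      IsUnit (ncdet (X - α * Ring.inverse Y * β) * Ring.inverse (ncdet Y)) ∧
      Ring.inverse (ncdet X) * ncdet (Y - β * Ring.inverse X * α) =
        Ring.inverse (ncdet (X - α * Ring.inverse Y * β) * Ring.inverse (ncdet Y)) := by
  have hP_even := hX_even.sub_mul_ringInverse_mul hα hβ hY_even hY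
  have hQ_even := hY_even.sub_mul_ringInverse_mul hβ hα hX_even hX
  have det_mul := evenDet_schurComplement_mul_evenDet_schurComplement hX_even hα hβ hY_even hX hY
  set P := X - α * Ring.inverse Y * β
  set Q := Y - β * Ring.inverse X * α
  have isUnit_P : IsUnit (evenDet 𝒜 P) := isUnit_of_mul_isUnit_left
    (det_mul ▸ (isUnit_evenDet hX_even hX).mul (isUnit_evenDet hY_even hY))
  have det_X_unit : IsUnit (evenDet 𝒜 X : R) := (isUnit_evenDet hX_even hX).map (zeroInclusion 𝒜)
  have det_Y_unit : IsUnit (evenDet 𝒜 Y : R) := (isUnit_evenDet hY_even hY).map (zeroInclusion 𝒜)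
  have det_P_unit : IsUnit (evenDet 𝒜 P : R) := isUnit_P.map (zeroInclusion 𝒜)
  rw [ncdet_eq_coe_evenDet hX_even, ncdet_eq_coe_evenDet hY_even, ncdet_eq_coe_evenDet hP_even,
    ncdet_eq_coe_evenDet hQ_even]
  refine ⟨congrArg Subtype.val det_mul, ?_, det_P_unit.mul det_Y_unit.ringInverse, ?_⟩
  · exact (SetLike.GradeZero.subring 𝒜).mul_mem (evenDet 𝒜 P).2
      (ringInverse_mem_zero (evenDet 𝒜 Y).2 det_Y_unit)
  · exact ringInverse_mul_eq_ringInverse_mul_ringInverse det_X_unit det_Y_unit det_P_unit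
      (congrArg Subtype.val ((mul_comm _ _).trans det_mul))

end Supercommutative

/-- Let `A = [[X, α],[β, Y]]` be an even `(k|l)`-supermatrix over `Λ` such that
both `X` and `Y` are invertible.  Then
`det(X − α·Y⁻¹·β)·det(Y − β·X⁻¹·α) = det(X)·det(Y)`.  Equivalently, `ber(A)` is an invertible
element of `Λ₀` and `ber*(A) = ber(A)⁻¹`. -/
theorem statement2 (n k l : ℕ) (A : Matrix (Fin (k + l)) (Fin (k + l)) (SuperAlg n))
    (hA : IsEvenSupermatrix n k l A)
    (hX : IsUnit (Xblk n k l A)) (hY : IsUnit (Yblk n k l A)) :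
    ncdet (Xblk n k l A - alphaBlk n k l A * Ring.inverse (Yblk n k l A) * betaBlk n k l A) *
        ncdet (Yblk n k l A - betaBlk n k l A * Ring.inverse (Xblk n k l A) * alphaBlk n k l A)
      = ncdet (Xblk n k l A) * ncdet (Yblk n k l A) ∧
    ber n k l A ∈ evenPart n ∧ IsUnit (ber n k l A) ∧
    berStar n k l A = Ring.inverse (ber n k l A) := by
  obtain ⟨hX_even, hY_even, hα, hβ⟩ := hA
  exact statement2_general (𝒜 := CliffordAlgebra.evenOdd 0) hX_even hα hβ hY_even hX hY

end
end

section
/- Let U ⊆ ℂ be open, let F = f + θφ be an even superfunction on U (f : U → Λ₀ and φ : U → Λ₁ holomorphic) and Ψ = ψ + θg an odd superfunction on U (ψ : U → Λ₁ and g : U → Λ₀ holomorphic), and assume g(z) is invertible in Λ for every z ∈ U. Then ∂_θΨ = g and DΨ = g + θψ′ are invertible superfunctions, and the Berezinian of the super-Jacobian matrix satisfies ber [[∂_zF, ∂_zΨ],[∂_θF, ∂_θΨ]] = D(DF·(DΨ)⁻¹); explicitly, (∂_zF − ∂_zΨ·(∂_θΨ)⁻¹·∂_θF)·(∂_θΨ)⁻¹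 = D((DF)·(DΨ)⁻¹), where ∂_zF = f′ + θφ′, ∂_θF = φ, ∂_zΨ = ψ′ + θg′, ∂_θΨ = g. -/
noncomputable section

open ExteriorAlgebra

set_option synthInstance.maxHeartbeats 1000000 in
theorem superAlg_noZeroSMulDivisors (n : ℕ) : NoZeroSMulDivisors ℂ (SuperAlg n) :=
  inferInstance

theorem superAlg_exteriorPower_eq_bot (n i : ℕ) (hi : n < i) :
    (⋀[ℂ]^i (Fin n → ℂ) : Submodule ℂ (SuperAlg n)) = ⊥ := by
  rw [← ExteriorAlgebra.ιMulti_span_fixedDegree]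
  refine le_bot_iff.mp (Submodule.span_le.mpr ?_)
  rintro x ⟨v, rfl⟩
  have hv : ¬ LinearIndependent ℂ v := by
    intro h
    have hc := h.fintype_card_le_finrank
    simp only [Fintype.card_fin, Module.finrank_fin_fun] at hc
    omega
  haveI := superAlg_noZeroSMulDivisors n
  simpa using AlternatingMap.map_linearDependent (ιMulti ℂ i) v hv

/-- `Λ` is a finite-dimensional complex vector space (of dimension `2ⁿ`). -/
instance superAlg_moduleFinite (n : ℕ) : Module.Finite ℂ (SuperAlg n) := by
  classical
  rw [Module.finite_def]
  have hfg : ∀ i : ℕ, (⋀[ℂ]^i (Fin n → ℂ) : Submodule ℂ (SuperAlg n)).FG := by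
    intro i
    refine Submodule.FG.pow ?_ i
    rw [LinearMap.range_eq_map]
    exact Submodule.FG.map _ (Module.finite_def.mp inferInstance)
  have hint : DirectSum.IsInternal
      (fun i : ℕ => (⋀[ℂ]^i (Fin n → ℂ) : Submodule ℂ (SuperAlg n))) :=
    DirectSum.Decomposition.isInternal _
  have htop := hint.submodule_iSup_eq_top
  have hsup : (⊤ : Submodule ℂ (SuperAlg n))
      = ⨆ i ∈ Finset.range (n + 1), (⋀[ℂ]^i (Fin n → ℂ) : Submodule ℂ (SuperAlg n)) := by
    refine le_antisymm ?_ le_top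
    rw [← htop]
    refine iSup_le fun i => ?_
    rcases le_or_gt i n with hi | hi
    · exact le_biSup _ (Finset.mem_range.mpr (by omega))
    · rw [superAlg_exteriorPower_eq_bot n i hi]
      exact bot_le
  rw [hsup]
  exact Submodule.fg_biSup _ _ fun i _ => hfg i

/-- A norm on the finite-dimensional complex vector space `Λ`, transported from `ℂ^{2ⁿ}` by a
choice of basis.  (All norms on a finite-dimensional complex vector space are equivalent, so
the notions of holomorphy and derivative below do not depend on this choice; holomorphy is
equivalent to componentwise complex analyticity with respect to any basis.) -/
instance superAlg_normedAddCommGroup (n : ℕ) : NormedAddCommGroup (SuperAlg n) :=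
  NormedAddCommGroup.induced (SuperAlg n)
    (Fin (Module.finrank ℂ (SuperAlg n)) → ℂ)
    (Module.finBasis ℂ (SuperAlg n)).equivFun
    (Module.finBasis ℂ (SuperAlg n)).equivFun.injective

instance superAlg_normedSpace (n : ℕ) : NormedSpace ℂ (SuperAlg n) :=
  NormedSpace.induced ℂ (SuperAlg n) (Fin (Module.finrank ℂ (SuperAlg n)) → ℂ)
    (Module.finBasis ℂ (SuperAlg n)).equivFun

/-- The reduction `λ ↦ λ^red`: the image of `λ ∈ Λ` under the augmentation `Λ → ℂ`
(quotienting out nilpotents). -/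
def reduce (n : ℕ) (a : SuperAlg n) : ℂ :=
  ExteriorAlgebra.algebraMapInv (R := ℂ) (M := Fin n → ℂ) a

/-- A superfunction `p + θq` on (an open subset of) `ℂ`, represented by the pair `(p, q)` of
`Λ`-valued functions. -/
abbrev SF1 (n : ℕ) : Type := (ℂ → SuperAlg n) × (ℂ → SuperAlg n)

/-- The parity automorphism `σ` of `Λ` (identity on `Λ₀`, `−1` on `Λ₁`), i.e. the grade
involution of the exterior algebra. -/
def parityAut {n : ℕ} (a : SuperAlg n) : SuperAlg n := CliffordAlgebra.involute a

/-- The product of superfunctions: `(p+θq)·(r+θs) = p·r + θ(q·r + σ(p)·s)`. -/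
def sfMul {n : ℕ} (a b : SF1 n) : SF1 n :=
  (fun z => a.1 z * b.1 z, fun z => a.2 z * b.1 z + parityAut (a.1 z) * b.2 z)

/-- The inverse of a superfunction `p + θq` (meaningful where `p(z)` is invertible in `Λ`):
`(p+θq)⁻¹ = p⁻¹ − θ(σ(p⁻¹)·q·p⁻¹)`. -/
def sfInv {n : ℕ} (a : SF1 n) : SF1 n :=
  (fun z => Ring.inverse (a.1 z),
   fun z => -(parityAut (Ring.inverse (a.1 z)) * a.2 z * Ring.inverse (a.1 z)))

/-- The constant superfunction `1`. -/
def sfOne (n : ℕ) : SF1 n := (fun _ => 1, fun _ => 0)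

/-- The superderivative `D(p+θq) = q + θp′`. -/
def sfD {n : ℕ} (a : SF1 n) : SF1 n := (a.2, fun z => deriv a.1 z)

/-- `∂_z(p+θq) = p′ + θq′`. -/
def sfDz {n : ℕ} (a : SF1 n) : SF1 n := (fun z => deriv a.1 z, fun z => deriv a.2 z)

/-- `∂_θ(p+θq) = q` (as the superfunction `q + θ·0`). -/
def sfDtheta {n : ℕ} (a : SF1 n) : SF1 n := (a.2, fun _ => 0)

/-- Componentwise equality of superfunctions on `U`. -/
def EqOn1 {n : ℕ} (U : Set ℂ) (a b : SF1 n) : Prop :=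
  Set.EqOn a.1 b.1 U ∧ Set.EqOn a.2 b.2 U

/-!
Write `F = f + θφ`, `Ψ = ψ + θg` and `h = g⁻¹`. On components the identity reads
`(f′ - ψ′hφ)h = f′h - σ(φ)σ(h)ψ′h` and `(φ′ - g′hφ)h = (φh)′`. The parities of `ψ` and `g` are
inherited by `ψ′` and `g′`, since the even and odd parts of `Λ` are closed subspaces. The first
equation then follows from `ψ′x = σ(x)ψ′` for all `x`, and the second from `h′ = -hg′h`; both use
that `h` is central, as `g` is.
-/

section Supercommutativity

variable {R M : Type*} [CommRing R] [AddCommGroup M] [Module R M]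

theorem ι_mul_eq_involute_mul_ι (v : M) (x : ExteriorAlgebra R M) :
    ι R v * x = CliffordAlgebra.involute x * ι R v := by
  induction x using CliffordAlgebra.induction with
  | algebraMap r => rw [AlgHom.commutes]; exact (Algebra.commutes r _).symm
  | ι w =>
    rw [CliffordAlgebra.involute_ι, neg_mul]
    exact eq_neg_of_add_eq_zero_left (ι_add_mul_swap v w)
  | mul x y hx hy => rw [map_mul, ← mul_assoc, hx, mul_assoc, hy, mul_assoc]
  | add x y hx hy => rw [map_add, mul_add, add_mul, hx, hy]

theorem commute_of_mem_evenOdd_zero_s3 {a : ExteriorAlgebra R M}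
    (ha : a ∈ CliffordAlgebra.evenOdd (0 : QuadraticForm R M) 0) (x : ExteriorAlgebra R M) :
    Commute a x := by
  induction x using CliffordAlgebra.induction with
  | algebraMap r => exact Algebra.commute_algebraMap_right r a
  | ι w =>
    have hι := ι_mul_eq_involute_mul_ι w a
    rw [CliffordAlgebra.involute_eq_of_mem_even ha] at hι
    exact hι.symm
  | mul x y hx hy => exact hx.mul_right hy
  | add x y hx hy => exact hx.add_right hy

theorem mul_eq_involute_mul_of_mem_evenOdd_one {a : ExteriorAlgebra R M}
    (ha : a ∈ CliffordAlgebra.evenOdd (0 : QuadraticForm R M) 1) (x : ExteriorAlgebra R M) :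
    a * x = CliffordAlgebra.involute x * a := by
  induction x using CliffordAlgebra.induction with
  | algebraMap r => rw [AlgHom.commutes]; exact (Algebra.commutes r a).symm
  | ι w =>
    have hι := ι_mul_eq_involute_mul_ι w a
    rw [CliffordAlgebra.involute_eq_of_mem_odd ha, neg_mul] at hι
    rw [CliffordAlgebra.involute_ι, neg_mul]
    exact (neg_eq_iff_eq_neg.mpr hι).symm
  | mul x y hx hy => rw [map_mul, ← mul_assoc, hx, mul_assoc, hy, mul_assoc]
  | add x y hx hy => rw [map_add, mul_add, add_mul, hx, hy]

end Supercommutativity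

section RingInverse

variable {M₀ N₀ : Type*} [MonoidWithZero M₀] [MonoidWithZero N₀]

theorem commute_ringInverse_left {a b : M₀} (h : Commute a b) : Commute (Ring.inverse a) b := by
  by_cases ha : IsUnit a
  · obtain ⟨u, rfl⟩ := ha
    rw [Ring.inverse_unit]
    exact h.units_inv_left
  · rw [Ring.inverse_non_unit a ha]
    exact Commute.zero_left b

theorem map_ringInverse {F : Type*} [FunLike F M₀ N₀] [MonoidWithZeroHomClass F M₀ N₀]
    (f : F) [IsLocalHom f] (a : M₀) : f (Ring.inverse a) = Ring.inverse (f a) := by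
  by_cases ha : IsUnit a
  · rw [← mul_one (Ring.inverse (f a)), eq_comm, Ring.inverse_mul_eq_iff_eq_mul _ _ _ (ha.map f),
      ← map_mul, Ring.mul_inverse_cancel a ha, map_one]
  · rw [Ring.inverse_non_unit a ha, Ring.inverse_non_unit _ (mt (isUnit_of_map_unit f a) ha),
      map_zero]

end RingInverse

theorem deriv_mem_of_isClosed_submodule {𝕜 E : Type*} [NontriviallyNormedField 𝕜]
    [NormedAddCommGroup E] [NormedSpace 𝕜 E] {K : Submodule 𝕜 E} (hK : IsClosed (K : Set E))
    {U : Set 𝕜} (hU : IsOpen U) {f : 𝕜 → E} (hf : ∀ w ∈ U, f w ∈ K) {z : 𝕜} (hz : z ∈ U) :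
    deriv f z ∈ K := by
  have hspan : Submodule.span 𝕜 (f '' U) ≤ K :=
    Submodule.span_le.mpr (Set.image_subset_iff.mpr hf)
  have hclosure : derivWithin f U z ∈ closure (Submodule.span 𝕜 (f '' U) : Set E) :=
    range_derivWithin_subset_closure_span_image f
      (by simpa only [Set.inter_self] using subset_closure) (Set.mem_range_self z)
  rw [derivWithin_of_isOpen hU hz] at hclosure
  exact closure_minimal hspan hK hclosure

theorem hasDerivAt_ringInverse {𝕜 A : Type*} [NontriviallyNormedField 𝕜] [NormedRing A]
    [HasSummableGeomSeries A] [NormedAlgebra 𝕜 A] {a : 𝕜 → A} {a' : A} {z : 𝕜}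
    (ha : HasDerivAt a a' z) (hunit : IsUnit (a z)) :
    HasDerivAt (fun w => Ring.inverse (a w))
      (-(Ring.inverse (a z) * a' * Ring.inverse (a z))) z := by
  obtain ⟨u, hu⟩ := hunit
  have hinverse := hasFDerivAt_ringInverse (𝕜 := 𝕜) u
  rw [← Ring.inverse_unit u, hu] at hinverse
  exact hinverse.comp_hasDerivAt z ha

section SuperAlg

variable {n : ℕ}

/-- The left regular representation of `Λ` by continuous operators. The norm on `Λ` need not be
submultiplicative, so calculus in normed algebras applies to the operators only. -/
def leftMul (n : ℕ) : SuperAlg n →ₐ[ℂ] (SuperAlg n →L[ℂ] SuperAlg n) :=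
  (Module.End.toContinuousLinearMap (SuperAlg n)).toAlgHom.comp (Algebra.lmul ℂ (SuperAlg n))

theorem leftMul_apply (a x : SuperAlg n) : leftMul n a x = a * x := rfl

instance isLocalHom_leftMul : IsLocalHom (leftMul n) where
  map_nonunit a ha := by
    rw [← Algebra.lmul_isUnit_iff (R := ℂ)]
    exact (MulEquiv.isUnit_map (Module.End.toContinuousLinearMap (SuperAlg n))).mp ha

theorem hasDerivAt_leftMul {a : ℂ → SuperAlg n} {a' : SuperAlg n} {z : ℂ}
    (ha : HasDerivAt a a' z) : HasDerivAt (fun w => leftMul n (a w)) (leftMul n a') z :=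
  (leftMul n).toLinearMap.toContinuousLinearMap.hasFDerivAt.comp_hasDerivAt z ha

theorem hasDerivAt_superAlg_mul {a b : ℂ → SuperAlg n} {a' b' : SuperAlg n} {z : ℂ}
    (ha : HasDerivAt a a' z) (hb : HasDerivAt b b' z) :
    HasDerivAt (fun w => a w * b w) (a' * b z + a z * b') z :=
  (hasDerivAt_leftMul ha).clm_apply hb

theorem hasDerivAt_superAlg_inverse {a : ℂ → SuperAlg n} {a' : SuperAlg n} {z : ℂ}
    (ha : HasDerivAt a a' z) (hunit : IsUnit (a z)) :
    HasDerivAt (fun w => Ring.inverse (a w))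
      (-(Ring.inverse (a z) * a' * Ring.inverse (a z))) z := by
  have : CompleteSpace (SuperAlg n) := FiniteDimensional.complete ℂ _
  have hop := (hasDerivAt_ringInverse (hasDerivAt_leftMul ha) (hunit.map (leftMul n))).clm_apply
    (hasDerivAt_const z (1 : SuperAlg n))
  simp only [← map_ringInverse, ← map_mul, ← map_neg, leftMul_apply, mul_one, mul_zero,
    add_zero] at hop
  exact hop

theorem deriv_mem_evenPart {U : Set ℂ} (hU : IsOpen U) {f : ℂ → SuperAlg n}
    (hf : ∀ w ∈ U, f w ∈ evenPart n) {z : ℂ} (hz : z ∈ U) : deriv f z ∈ evenPart n :=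
  deriv_mem_of_isClosed_submodule (Submodule.closed_of_finiteDimensional _) hU hf hz

theorem deriv_mem_oddPart {U : Set ℂ} (hU : IsOpen U) {f : ℂ → SuperAlg n}
    (hf : ∀ w ∈ U, f w ∈ oddPart n) {z : ℂ} (hz : z ∈ U) : deriv f z ∈ oddPart n :=
  deriv_mem_of_isClosed_submodule (Submodule.closed_of_finiteDimensional _) hU hf hz

end SuperAlg

section Superfunctions

variable {n : ℕ} {U : Set ℂ}

/-- Holomorphy of a superfunction on `U`, that is, of both its components. -/
structure SFHolomorphicOn (U : Set ℂ) (a : SF1 n) : Prop where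
  fst : DifferentiableOn ℂ a.1 U
  snd : DifferentiableOn ℂ a.2 U

/-- Odd superfunctions on `U`: as `θ` is odd, the coefficient of `θ` is even. -/
structure SFOddOn (U : Set ℂ) (a : SF1 n) : Prop where
  fst : ∀ z ∈ U, a.1 z ∈ oddPart n
  snd : ∀ z ∈ U, a.2 z ∈ evenPart n

/-- The Berezinian `(a - b·d⁻¹·c)·d⁻¹` of the matrix `[[a, b], [c, d]]` of superfunctions, as a
formula that makes sense for entries of any parity. -/
def sfBer (a b c d : SF1 n) : SF1 n :=
  sfMul (a - sfMul (sfMul b (sfInv d)) c) (sfInv d)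

theorem sfMul_sfInv {a : SF1 n} (ha : ∀ z ∈ U, IsUnit (a.1 z)) :
    EqOn1 U (sfMul a (sfInv a)) (sfOne n) := by
  refine ⟨fun z hz => Ring.mul_inverse_cancel _ (ha z hz), fun z hz => ?_⟩
  have hparity : parityAut (a.1 z) * parityAut (Ring.inverse (a.1 z)) = 1 := by
    rw [parityAut, parityAut, ← map_mul, Ring.mul_inverse_cancel _ (ha z hz), map_one]
  simp only [sfMul, sfInv, sfOne]
  rw [mul_neg, ← mul_assoc, ← mul_assoc, hparity, one_mul, add_neg_cancel]

theorem sfInv_sfMul {a : SF1 n} (ha : ∀ z ∈ U, IsUnit (a.1 z)) :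
    EqOn1 U (sfMul (sfInv a) a) (sfOne n) := by
  refine ⟨fun z hz => Ring.inverse_mul_cancel _ (ha z hz), fun z hz => ?_⟩
  simp only [sfMul, sfInv, sfOne]
  rw [neg_mul, Ring.inverse_mul_cancel_right _ _ (ha z hz), neg_add_cancel]

theorem sfBer_superJacobian_fst (hU : IsOpen U) (F : SF1 n) {Ψ : SF1 n} (hΨ : SFOddOn U Ψ)
    {z : ℂ} (hz : z ∈ U) :
    (sfBer (sfDz F) (sfDz Ψ) (sfDtheta F) (sfDtheta Ψ)).1 z =
      (sfD (sfMul (sfD F) (sfInv (sfD Ψ)))).1 z := by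
  obtain ⟨f, φ⟩ := F
  obtain ⟨ψ, g⟩ := Ψ
  set h := Ring.inverse (g z)
  have hcentral : Commute h (φ z) :=
    commute_ringInverse_left (commute_of_mem_evenOdd_zero_s3 (hΨ.snd z hz) _)
  have hswap : deriv ψ z * h * φ z = parityAut (φ z) * parityAut h * deriv ψ z := by
    rw [mul_assoc, hcentral.eq,
      mul_eq_involute_mul_of_mem_evenOdd_one (deriv_mem_oddPart hU hΨ.fst hz), map_mul]
    rfl
  change (deriv f z - deriv ψ z * h * φ z) * h =
    deriv f z * h + parityAut (φ z) * -(parityAut h * deriv ψ z * h)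
  rw [hswap, sub_mul, sub_eq_add_neg, mul_neg]
  simp only [mul_assoc]

theorem sfBer_superJacobian_snd (hU : IsOpen U) {F Ψ : SF1 n} (hF : SFHolomorphicOn U F)
    (hΨ : SFHolomorphicOn U Ψ) (hodd : SFOddOn U Ψ) (hunit : ∀ z ∈ U, IsUnit (Ψ.2 z))
    {z : ℂ} (hz : z ∈ U) :
    (sfBer (sfDz F) (sfDz Ψ) (sfDtheta F) (sfDtheta Ψ)).2 z =
      (sfD (sfMul (sfD F) (sfInv (sfD Ψ)))).2 z := by
  obtain ⟨f, φ⟩ := F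
  obtain ⟨ψ, g⟩ := Ψ
  have hφ := (hF.snd.differentiableAt (hU.mem_nhds hz)).hasDerivAt
  have hg := (hΨ.snd.differentiableAt (hU.mem_nhds hz)).hasDerivAt
  have hquotient := (hasDerivAt_superAlg_mul hφ (hasDerivAt_superAlg_inverse hg (hunit z hz))).deriv
  set h := Ring.inverse (g z)
  have hcentral : Commute h (φ z) :=
    commute_ringInverse_left (commute_of_mem_evenOdd_zero_s3 (hodd.snd z hz) _)
  have hg' : Commute (deriv g z) (φ z * h) :=
    commute_of_mem_evenOdd_zero_s3 (deriv_mem_evenPart hU hodd.snd hz) _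
  calc (sfBer (sfDz (f, φ)) (sfDz (ψ, g)) (sfDtheta (f, φ)) (sfDtheta (ψ, g))).2 z
      = (deriv φ z - deriv g z * h * φ z) * h := by
        simp [sfBer, sfMul, sfInv, sfDtheta, sfDz, h]
    _ = deriv φ z * h + φ z * -(h * deriv g z * h) := by
        rw [sub_mul, mul_assoc (deriv g z), hcentral.eq, hg'.eq, mul_neg, ← sub_eq_add_neg]
        simp only [mul_assoc]
    _ = deriv (fun w => φ w * Ring.inverse (g w)) z := hquotient.symm

theorem statement3_general (hU : IsOpen U) {F Ψ : SF1 n} (hF : SFHolomorphicOn U F)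
    (hΨ : SFHolomorphicOn U Ψ) (hodd : SFOddOn U Ψ) (hunit : ∀ z ∈ U, IsUnit (Ψ.2 z)) :
    (EqOn1 U (sfMul (sfDtheta Ψ) (sfInv (sfDtheta Ψ))) (sfOne n) ∧
      EqOn1 U (sfMul (sfInv (sfDtheta Ψ)) (sfDtheta Ψ)) (sfOne n)) ∧
    (EqOn1 U (sfMul (sfD Ψ) (sfInv (sfD Ψ))) (sfOne n) ∧
      EqOn1 U (sfMul (sfInv (sfD Ψ)) (sfD Ψ)) (sfOne n)) ∧
    EqOn1 U (sfBer (sfDz F) (sfDz Ψ) (sfDtheta F) (sfDtheta Ψ))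
      (sfD (sfMul (sfD F) (sfInv (sfD Ψ)))) :=
  ⟨⟨sfMul_sfInv hunit, sfInv_sfMul hunit⟩, ⟨sfMul_sfInv hunit, sfInv_sfMul hunit⟩,
    fun _ hz => sfBer_superJacobian_fst hU F hodd hz,
    fun _ hz => sfBer_superJacobian_snd hU hF hΨ hodd hunit hz⟩

end Superfunctions

/-- Let `U ⊆ ℂ` be open, `F = f + θφ` an even superfunction and
`Ψ = ψ + θg` an odd superfunction on `U`, with `g(z)` invertible in `Λ` for every `z ∈ U`.
Then `∂_θΨ` and `DΨ` are invertible superfunctions, and the Berezinian of the super-Jacobian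
matrix satisfies
`(∂_zF − ∂_zΨ·(∂_θΨ)⁻¹·∂_θF)·(∂_θΨ)⁻¹ = D(DF·(DΨ)⁻¹)` on `U`. -/
theorem statement3 (n : ℕ) (U : Set ℂ) (hU : IsOpen U) (f φ ψ g : ℂ → SuperAlg n)
    (hf : DifferentiableOn ℂ f U) (hφ : DifferentiableOn ℂ φ U)
    (hψ : DifferentiableOn ℂ ψ U) (hg : DifferentiableOn ℂ g U)
    (hfe : ∀ z ∈ U, f z ∈ evenPart n) (hφo : ∀ z ∈ U, φ z ∈ oddPart n)
    (hψo : ∀ z ∈ U, ψ z ∈ oddPart n) (hge : ∀ z ∈ U, g z ∈ evenPart n)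
    (hginv : ∀ z ∈ U, IsUnit (g z)) :
    (EqOn1 U (sfMul (sfDtheta ((ψ, g) : SF1 n)) (sfInv (sfDtheta ((ψ, g) : SF1 n)))) (sfOne n) ∧
     EqOn1 U (sfMul (sfInv (sfDtheta ((ψ, g) : SF1 n))) (sfDtheta ((ψ, g) : SF1 n))) (sfOne n)) ∧
    (EqOn1 U (sfMul (sfD ((ψ, g) : SF1 n)) (sfInv (sfD ((ψ, g) : SF1 n)))) (sfOne n) ∧
     EqOn1 U (sfMul (sfInv (sfD ((ψ, g) : SF1 n))) (sfD ((ψ, g) : SF1 n))) (sfOne n)) ∧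
    EqOn1 U
      (sfMul
        (sfDz ((f, φ) : SF1 n) -
          sfMul (sfMul (sfDz ((ψ, g) : SF1 n)) (sfInv (sfDtheta ((ψ, g) : SF1 n))))
            (sfDtheta ((f, φ) : SF1 n)))
        (sfInv (sfDtheta ((ψ, g) : SF1 n))))
      (sfD (sfMul (sfD ((f, φ) : SF1 n)) (sfInv (sfD ((ψ, g) : SF1 n))))) :=
  statement3_general hU (F := (f, φ)) (Ψ := (ψ, g)) ⟨hf, hφ⟩ ⟨hψ, hg⟩ ⟨hψo, hge⟩ hginv

end
end

section
/- (Super Cramer's rule, even positions.) Let A = [[X, α],[β, Y]] be an invertible even (k|l)-supermatrix over Λ (equivalently, X and Y are both invertible), set m := k+l, and let x, y ∈ Λ^m be row vectors with x·A = y, i.e. Σ_p x_p·a_{pj} = y_j for all j. Write y = (y′, y″) with y′ its first k entries and y″ its last l entries. Then for every i ≤ k: x_i·det(X − α·Y⁻¹·β) = Σ_{j=1}^{k} (y′ − y″·Y⁻¹·β)_j·C_{ij}, where C_{ij} denotes the (i,j)-cofactor of the matrix X − α·Y⁻¹·β over the commutative ring Λ₀; that is, x_i·det(X − α·Y⁻¹·β)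 equals the row-i Laplace expansion of the determinant of the matrix obtained from X − α·Y⁻¹·β by replacing its i-th row with the row y′ − y″·Y⁻¹·β. Equivalently, x_i = ber(A_i(y))·ber(A)⁻¹, where ber(A_i(y)) is obtained from the expression ber(A) = det(X − α·Y⁻¹·β)·det(Y)⁻¹, which is Λ-linear in the entries of row i of A, by substituting y_j for a_{ij} (j = 1,…,m). -/
noncomputable section

open ExteriorAlgebra

/-! Over any ring, eliminating `x''` from the two block rows of `x * A = y` gives
`x' * (X - α * Y⁻¹ * β) = y' - y'' * Y⁻¹ * β`. The Schur complement `X - α * Y⁻¹ * β` has central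
entries, so the adjugate of its lift to the center still solves this system although `x` and `y`
have noncommuting entries; and it differs from `X` by nilpotents, so its determinant is
invertible. -/

open Matrix
open scoped Ring

section CentralEntries

variable {R : Type*} [Ring R] {m n : Type*}

theorem forall_mem_center_iff_forall_commute_scalar [Fintype n] [DecidableEq n]
    {M : Matrix n n R} :
    (∀ i j, M i j ∈ Subring.center R) ↔ ∀ r, Commute (scalar n r) M := by
  simp only [scalar_commute_iff, ← Matrix.ext_iff, Subring.mem_center_iff, Matrix.smul_apply,
    MulOpposite.smul_eq_mul_unop, smul_eq_mul, MulOpposite.unop_op]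
  exact ⟨fun h r i j => h i j r, fun h i j r => h r i j⟩

theorem ringInverse_apply_mem_center [Fintype n] [DecidableEq n] {M : Matrix n n R}
    (hM : ∀ i j, M i j ∈ Subring.center R) (i j : n) : M⁻¹ʳ i j ∈ Subring.center R := by
  by_cases hunit : IsUnit M
  · obtain ⟨u, rfl⟩ := hunit
    rw [Ring.inverse_unit]
    exact forall_mem_center_iff_forall_commute_scalar.2
      (fun r => (forall_mem_center_iff_forall_commute_scalar.1 hM r).units_inv_right) i j
  · rw [Ring.inverse_non_unit M hunit]
    exact zero_mem _

theorem exists_map_algebraMap_center_eq {M : Matrix m n R}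
    (hM : ∀ i j, M i j ∈ Subring.center R) :
    ∃ N : Matrix m n (Subring.center R), N.map (algebraMap (Subring.center R) R) = M :=
  ⟨of fun i j => ⟨M i j, hM i j⟩, rfl⟩

theorem isUnit_map_algebraMap_center_iff [Fintype n] [DecidableEq n]
    {M : Matrix n n (Subring.center R)} :
    IsUnit (M.map (algebraMap (Subring.center R) R)) ↔ IsUnit M := by
  refine ⟨fun h => ?_, fun h => h.map (algebraMap (Subring.center R) R).mapMatrix⟩
  obtain ⟨W, hW⟩ := exists_map_algebraMap_center_eq
    (ringInverse_apply_mem_center (M := M.map (algebraMap (Subring.center R) R))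
      fun i j => (M i j).2)
  have hMW := Ring.mul_inverse_cancel _ h
  rw [← hW, ← Matrix.map_mul] at hMW
  refine IsUnit.of_mul_eq_one W (Matrix.map_injective Subtype.val_injective ?_)
  exact hMW.trans (Matrix.map_one Subtype.val rfl rfl).symm

end CentralEntries

section Determinant

variable {C R : Type*} [CommRing C] [Ring R] [Algebra C R] {k : ℕ}

theorem ncdet_map_algebraMap (M : Matrix (Fin k) (Fin k) C) :
    ncdet (M.map (algebraMap C R)) = algebraMap C R M.det := by
  simp only [ncdet, det_apply, map_sum, Units.smul_def, map_zsmul, ← List.prod_ofFn,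
    map_list_prod, List.map_ofFn, Function.comp_def, map_apply]

theorem prod_ofFn_update_algebraMap (c : Fin k → C) (j : Fin k) (r : R) :
    (List.ofFn (Function.update (fun p => algebraMap C R (c p)) j r)).prod =
      r * algebraMap C R (∏ p, Function.update c j 1 p) := by
  have hfactor : Function.update (fun p => algebraMap C R (c p)) j r =
      fun p => Function.update c j 1 p • Function.update (1 : Fin k → R) j r p := by
    ext p
    obtain rfl | hp := eq_or_ne p j
    · simp
    · simp [hp, Algebra.algebraMap_eq_smul_one]
  have hsingle : (List.ofFn (Function.update (1 : Fin k → R) j r)).prod = r := by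
    simp [List.ofFn_eq_map, (List.nodup_finRange k).map_update, List.prod_set, Pi.one_def]
  have hsmul := (MultilinearMap.mkPiAlgebraFin C k R).map_smul_univ (Function.update c j 1)
    (Function.update 1 j r)
  simp only [MultilinearMap.mkPiAlgebraFin_apply, hsingle] at hsmul
  rw [hfactor, hsmul, Algebra.smul_def, Algebra.commutes]

theorem updateRow_perm_apply {S : Type*} (M : Matrix (Fin k) (Fin k) S) (i : Fin k)
    (z : Fin k → S) (σ : Equiv.Perm (Fin k)) :
    (fun p => M.updateRow i z (σ p) p) =
      Function.update (fun p => M (σ p) p) (σ.symm i) (z (σ.symm i)) := by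
  ext p
  obtain rfl | hp := eq_or_ne p (σ.symm i)
  · simp
  · rw [Function.update_of_ne hp, updateRow_ne fun h => hp (σ.eq_symm_apply.2 h)]

theorem ncdet_updateRow_map_algebraMap (M : Matrix (Fin k) (Fin k) C) (i : Fin k)
    (z : Fin k → R) :
    ncdet ((M.map (algebraMap C R)).updateRow i z) =
      (z ᵥ* M.adjugate.map (algebraMap C R)) i := by
  simp only [ncdet, vecMul, dotProduct, map_apply, adjugate_apply, det_apply, map_sum,
    Finset.mul_sum]
  rw [Finset.sum_comm]
  refine Finset.sum_congr rfl fun σ _ => ?_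
  rw [updateRow_perm_apply, Finset.sum_eq_single (σ.symm i)]
  · simp only [map_apply]
    rw [prod_ofFn_update_algebraMap, updateRow_perm_apply, Pi.single_eq_same, Units.smul_def,
      map_zsmul, mul_smul_comm]
  · intro j _ hj
    rw [Finset.prod_eq_zero (Finset.mem_univ (σ.symm i)), smul_zero, map_zero, mul_zero]
    simp [hj.symm]
  · simp

theorem vecMul_map_vecMul_adjugate_map (M : Matrix (Fin k) (Fin k) C) (x : Fin k → R)
    (i : Fin k) :
    (x ᵥ* M.map (algebraMap C R) ᵥ* M.adjugate.map (algebraMap C R)) i =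
      x i * algebraMap C R M.det := by
  have hmul : M.map (algebraMap C R) * M.adjugate.map (algebraMap C R) =
      diagonal fun _ => algebraMap C R M.det := by
    rw [← Matrix.map_mul, mul_adjugate, smul_one_eq_diagonal, diagonal_map (map_zero _)]
  rw [vecMul_vecMul, hmul, vecMul_diagonal]

theorem adjugate_map_algebraMap_apply (M : Matrix (Fin (k + 1)) (Fin (k + 1)) C)
    (i j : Fin (k + 1)) :
    M.adjugate.map (algebraMap C R) j i = ((-1 : ℤ) ^ ((i : ℕ) + (j : ℕ))) •
      ncdet ((M.map (algebraMap C R)).submatrix i.succAbove j.succAbove) := by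
  rw [map_apply, adjugate_fin_succ_eq_det_submatrix, submatrix_map, ncdet_map_algebraMap]
  simp

theorem isUnit_det_sub_of_isNilpotent {n : Type*} [Fintype n] [DecidableEq n]
    {M N : Matrix n n C} (hM : IsUnit M) (hN : ∀ i j, IsNilpotent (N i j)) :
    IsUnit (M - N).det := by
  have := isLocalHom_of_le_jacobson_bot (nilradical C)
    ((nilradical_le_jacobson C).trans_eq Ideal.jacobson_bot.symm)
  have hN0 : (Ideal.Quotient.mk (nilradical C)).mapMatrix N = 0 := by
    ext i j
    exact Ideal.Quotient.eq_zero_iff_mem.2 (hN i j)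
  refine isUnit_of_map_unit (Ideal.Quotient.mk (nilradical C)) _ ?_
  rw [RingHom.map_det, map_sub, hN0, sub_zero, ← RingHom.map_det]
  exact ((isUnit_iff_isUnit_det M).1 hM).map _

end Determinant

section CentralDeterminant

variable {R : Type*} [Ring R] {k : ℕ} {M : Matrix (Fin k) (Fin k) R}

theorem ncdet_updateRow_vecMul (hM : ∀ i j, M i j ∈ Subring.center R) (x : Fin k → R)
    (i : Fin k) : ncdet (M.updateRow i (x ᵥ* M)) = x i * ncdet M := by
  obtain ⟨M, rfl⟩ := exists_map_algebraMap_center_eq hM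
  rw [ncdet_updateRow_map_algebraMap, vecMul_map_vecMul_adjugate_map, ncdet_map_algebraMap]

theorem ncdet_updateRow_eq_sum_cofactor {M : Matrix (Fin (k + 1)) (Fin (k + 1)) R}
    (hM : ∀ i j, M i j ∈ Subring.center R) (i : Fin (k + 1)) (z : Fin (k + 1) → R) :
    ncdet (M.updateRow i z) = ∑ j, z j * (((-1 : ℤ) ^ ((i : ℕ) + (j : ℕ))) •
      ncdet (M.submatrix i.succAbove j.succAbove)) := by
  obtain ⟨M, rfl⟩ := exists_map_algebraMap_center_eq hM
  simp only [ncdet_updateRow_map_algebraMap, vecMul, dotProduct, adjugate_map_algebraMap_apply]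

theorem isUnit_ncdet_sub_of_isNilpotent {N : Matrix (Fin k) (Fin k) R}
    (hM : ∀ i j, M i j ∈ Subring.center R) (hMunit : IsUnit M)
    (hN : ∀ i j, N i j ∈ Subring.center R) (hNnil : ∀ i j, IsNilpotent (N i j)) :
    IsUnit (ncdet (M - N)) := by
  obtain ⟨M, rfl⟩ := exists_map_algebraMap_center_eq hM
  obtain ⟨N, rfl⟩ := exists_map_algebraMap_center_eq hN
  rw [← Matrix.map_sub _ (map_sub _), ncdet_map_algebraMap]
  refine (isUnit_det_sub_of_isNilpotent (isUnit_map_algebraMap_center_iff.1 hMunit)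
    fun i j => ?_).map _
  exact (IsNilpotent.map_iff (f := algebraMap (Subring.center R) R) Subtype.val_injective).1
    (hNnil i j)

theorem isUnit_ncdet (hM : ∀ i j, M i j ∈ Subring.center R) (hMunit : IsUnit M) :
    IsUnit (ncdet M) := by
  simpa using isUnit_ncdet_sub_of_isNilpotent (N := 0) hM hMunit (fun _ _ => zero_mem _)
    fun _ _ => IsNilpotent.zero

end CentralDeterminant

theorem toBlocks₂₂_updateRow_inl {R m n : Type*} [DecidableEq m] [DecidableEq n]
    (A : Matrix (m ⊕ n) (m ⊕ n) R) (i : m) (y : m ⊕ n → R) :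
    (A.updateRow (.inl i) y).toBlocks₂₂ = A.toBlocks₂₂ := by
  ext
  simp [toBlocks₂₂]

section SchurComplement

variable {R : Type*} [Ring R] {m n : Type*} [Fintype n] [DecidableEq n]

/-- The Schur complement `X - α * Y⁻¹ * β` of the lower right block `Y` of `[[X, α], [β, Y]]`.
As `⁻¹ʳ` is `0` at a non-unit, it is just `X` when `Y` is not invertible. -/
def schurCompl (A : Matrix (m ⊕ n) (m ⊕ n) R) : Matrix m m R :=
  A.toBlocks₁₁ - A.toBlocks₁₂ * A.toBlocks₂₂⁻¹ʳ * A.toBlocks₂₁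

/-- The row `y' - y'' * Y⁻¹ * β`, where `y = (y', y'')`: what is left of the right-hand side of
`x * A = y` once the unknowns `x''` have been eliminated. -/
def reducedRow (A : Matrix (m ⊕ n) (m ⊕ n) R) (y : m ⊕ n → R) : m → R :=
  y ∘ Sum.inl - y ∘ Sum.inr ᵥ* A.toBlocks₂₂⁻¹ʳ ᵥ* A.toBlocks₂₁

theorem reducedRow_apply (A : Matrix (m ⊕ n) (m ⊕ n) R) (y : m ⊕ n → R) (j : m) :
    reducedRow A y j = y (.inl j) -
      ∑ r, ∑ q, y (.inr r) * A.toBlocks₂₂⁻¹ʳ r q * A.toBlocks₂₁ q j := by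
  simp only [reducedRow, Pi.sub_apply, vecMul, dotProduct, Finset.sum_mul, Function.comp_apply]
  rw [Finset.sum_comm]

theorem reducedRow_vecMul [Fintype m] {A : Matrix (m ⊕ n) (m ⊕ n) R}
    (hY : IsUnit A.toBlocks₂₂) (x : m ⊕ n → R) :
    reducedRow A (x ᵥ* A) = x ∘ Sum.inl ᵥ* schurCompl A := by
  have hsplit : x ᵥ* A = Sum.elim
      (x ∘ Sum.inl ᵥ* A.toBlocks₁₁ + x ∘ Sum.inr ᵥ* A.toBlocks₂₁)
      (x ∘ Sum.inl ᵥ* A.toBlocks₁₂ + x ∘ Sum.inr ᵥ* A.toBlocks₂₂) := by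
    conv_lhs => rw [← fromBlocks_toBlocks A, vecMul_fromBlocks]
  rw [reducedRow, hsplit, Sum.elim_comp_inl, Sum.elim_comp_inr, schurCompl]
  simp only [add_vecMul, vecMul_vecMul, vecMul_sub, Ring.mul_inverse_cancel _ hY, Matrix.one_mul]
  abel

theorem schurCompl_updateRow_inl [DecidableEq m] (A : Matrix (m ⊕ n) (m ⊕ n) R) (i : m)
    (y : m ⊕ n → R) :
    schurCompl (A.updateRow (.inl i) y) = (schurCompl A).updateRow i (reducedRow A y) := by
  have h₁₁ : (A.updateRow (.inl i) y).toBlocks₁₁ = A.toBlocks₁₁.updateRow i (y ∘ Sum.inl) := by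
    ext
    simp [toBlocks₁₁, updateRow_apply]
  have h₁₂ : (A.updateRow (.inl i) y).toBlocks₁₂ = A.toBlocks₁₂.updateRow i (y ∘ Sum.inr) := by
    ext
    simp [toBlocks₁₂, updateRow_apply]
  have h₂₁ : (A.updateRow (.inl i) y).toBlocks₂₁ = A.toBlocks₂₁ := by
    ext
    simp [toBlocks₂₁]
  rw [schurCompl, h₁₁, h₁₂, h₂₁, toBlocks₂₂_updateRow_inl, updateRow_mul, updateRow_mul]
  ext a b
  obtain rfl | ha := eq_or_ne a i
  · simp [reducedRow]
  · simp [schurCompl, ha]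

end SchurComplement

section EvenBlockMatrix

variable {R : Type*} [Ring R] {m n : Type*}

/-- Block matrices `[[X, α], [β, Y]]` over a ring with the two consequences of evenness over a
supercommutative algebra that Cramer's rule rests on: `X` and `Y` have central entries, and every
product of an entry of `α` with an entry of `β` is central and nilpotent. -/
structure IsEvenBlockMatrix (A : Matrix (m ⊕ n) (m ⊕ n) R) : Prop where
  toBlocks₁₁_mem_center : ∀ i j, A.toBlocks₁₁ i j ∈ Subring.center R
  toBlocks₂₂_mem_center : ∀ i j, A.toBlocks₂₂ i j ∈ Subring.center R
  mul_mem_center : ∀ i r q j, A.toBlocks₁₂ i r * A.toBlocks₂₁ q j ∈ Subring.center R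
  isNilpotent_mul : ∀ i r q j, IsNilpotent (A.toBlocks₁₂ i r * A.toBlocks₂₁ q j)

theorem mul_mul_apply_of_mem_center {p q : Type*} [Fintype n] [Fintype p] {W : Matrix n p R}
    (hW : ∀ i j, W i j ∈ Subring.center R) (M : Matrix m n R) (N : Matrix p q R) (i : m) (j : q) :
    (M * W * N) i j = ∑ s, ∑ r, W r s * (M i r * N s j) := by
  simp only [mul_apply, Finset.sum_mul, Subring.mem_center_iff.1 (hW _ _), mul_assoc]

namespace IsEvenBlockMatrix

variable [Fintype n] [DecidableEq n] {A : Matrix (m ⊕ n) (m ⊕ n) R}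

theorem ringInverse_mem_center (hA : IsEvenBlockMatrix A) (r q : n) :
    A.toBlocks₂₂⁻¹ʳ r q ∈ Subring.center R :=
  ringInverse_apply_mem_center hA.toBlocks₂₂_mem_center r q

theorem mul_ringInverse_mul_mem_center (hA : IsEvenBlockMatrix A) (i j : m) :
    (A.toBlocks₁₂ * A.toBlocks₂₂⁻¹ʳ * A.toBlocks₂₁) i j ∈ Subring.center R := by
  rw [mul_mul_apply_of_mem_center hA.ringInverse_mem_center]
  exact sum_mem fun q _ => sum_mem fun r _ =>
    mul_mem (hA.ringInverse_mem_center r q) (hA.mul_mem_center i r q j)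

theorem isNilpotent_mul_ringInverse_mul (hA : IsEvenBlockMatrix A) (i j : m) :
    IsNilpotent ((A.toBlocks₁₂ * A.toBlocks₂₂⁻¹ʳ * A.toBlocks₂₁) i j) := by
  have hcenter (q r : n) : A.toBlocks₂₂⁻¹ʳ r q * (A.toBlocks₁₂ i r * A.toBlocks₂₁ q j) ∈
      Subring.center R := mul_mem (hA.ringInverse_mem_center r q) (hA.mul_mem_center i r q j)
  rw [mul_mul_apply_of_mem_center hA.ringInverse_mem_center, ← Fintype.sum_prod_type']
  refine Commute.isNilpotent_sum (fun s _ => ?_) fun s t _ _ =>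
    Subring.mem_center_iff.1 (hcenter t.1 t.2) _
  exact Commute.isNilpotent_mul_left
    (Subring.mem_center_iff.1 (hA.mul_mem_center i s.2 s.1 j) _) (hA.isNilpotent_mul i s.2 s.1 j)

theorem schurCompl_mem_center (hA : IsEvenBlockMatrix A) (i j : m) :
    schurCompl A i j ∈ Subring.center R :=
  sub_mem (hA.toBlocks₁₁_mem_center i j) (hA.mul_ringInverse_mul_mem_center i j)

end IsEvenBlockMatrix

end EvenBlockMatrix

section Cramer

variable {R : Type*} [Ring R] {k l : ℕ}

/-- The Berezinian `det (X - α * Y⁻¹ * β) * (det Y)⁻¹` of `[[X, α], [β, Y]]` over any ring, with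
rows and columns indexed by the disjoint union of even and odd indices. -/
def berezinian (A : Matrix (Fin k ⊕ Fin l) (Fin k ⊕ Fin l) R) : R :=
  ncdet (schurCompl A) * (ncdet A.toBlocks₂₂)⁻¹ʳ

theorem isUnit_berezinian {A : Matrix (Fin k ⊕ Fin l) (Fin k ⊕ Fin l) R}
    (hA : IsEvenBlockMatrix A) (hX : IsUnit A.toBlocks₁₁) (hY : IsUnit A.toBlocks₂₂) :
    IsUnit (berezinian A) :=
  (isUnit_ncdet_sub_of_isNilpotent hA.toBlocks₁₁_mem_center hX hA.mul_ringInverse_mul_mem_center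
    hA.isNilpotent_mul_ringInverse_mul).mul (isUnit_ncdet hA.toBlocks₂₂_mem_center hY).ringInverse

theorem ncdet_schurCompl_updateRow_vecMul {A : Matrix (Fin k ⊕ Fin l) (Fin k ⊕ Fin l) R}
    (hA : IsEvenBlockMatrix A) (hY : IsUnit A.toBlocks₂₂) (x : Fin k ⊕ Fin l → R) (i : Fin k) :
    ncdet ((schurCompl A).updateRow i (reducedRow A (x ᵥ* A))) =
      x (.inl i) * ncdet (schurCompl A) := by
  rw [reducedRow_vecMul hY, ncdet_updateRow_vecMul hA.schurCompl_mem_center, Function.comp_apply]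

theorem berezinian_updateRow_vecMul {A : Matrix (Fin k ⊕ Fin l) (Fin k ⊕ Fin l) R}
    (hA : IsEvenBlockMatrix A) (hY : IsUnit A.toBlocks₂₂) (x : Fin k ⊕ Fin l → R) (i : Fin k) :
    berezinian (A.updateRow (.inl i) (x ᵥ* A)) = x (.inl i) * berezinian A := by
  rw [berezinian, schurCompl_updateRow_inl, toBlocks₂₂_updateRow_inl,
    ncdet_schurCompl_updateRow_vecMul hA hY, berezinian, mul_assoc]

theorem statement6_general {A : Matrix (Fin (k + 1) ⊕ Fin l) (Fin (k + 1) ⊕ Fin l) R}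
    (hA : IsEvenBlockMatrix A) (hX : IsUnit A.toBlocks₁₁) (hY : IsUnit A.toBlocks₂₂)
    {x y : Fin (k + 1) ⊕ Fin l → R} (hxy : x ᵥ* A = y) (i : Fin (k + 1)) :
    x (.inl i) * ncdet (schurCompl A) =
        ∑ j, reducedRow A y j * (((-1 : ℤ) ^ ((i : ℕ) + (j : ℕ))) •
          ncdet ((schurCompl A).submatrix i.succAbove j.succAbove)) ∧
      x (.inl i) = berezinian (A.updateRow (.inl i) y) * (berezinian A)⁻¹ʳ := by
  subst hxy
  constructor
  · rw [← ncdet_updateRow_eq_sum_cofactor hA.schurCompl_mem_center,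
      ncdet_schurCompl_updateRow_vecMul hA hY]
  · rw [berezinian_updateRow_vecMul hA hY,
      Ring.mul_inverse_cancel_right _ _ (isUnit_berezinian hA hX hY)]

end Cramer

section ExteriorAlgebra

variable {K M : Type*} [CommRing K] [AddCommGroup M] [Module K M]

theorem ι_mul_ι_mem_center (v w : M) :
    ι K v * ι K w ∈ Subring.center (ExteriorAlgebra K M) := by
  have anticomm (v w : M) : ι K v * ι K w = -(ι K w * ι K v) :=
    eq_neg_of_add_eq_zero_left (ι_add_mul_swap v w)
  rw [Subring.mem_center_iff]
  intro g
  induction g using ExteriorAlgebra.induction with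
  | algebraMap r => exact Algebra.commutes _ _
  | ι u =>
    calc ι K u * (ι K v * ι K w) = -(ι K v * (ι K u * ι K w)) := by
          rw [← mul_assoc, anticomm u v, neg_mul, mul_assoc]
      _ = ι K v * ι K w * ι K u := by rw [anticomm u w, mul_neg, neg_neg, mul_assoc]
  | mul a b iha ihb => rw [mul_assoc, ihb, ← mul_assoc, iha, mul_assoc]
  | add a b iha ihb => rw [add_mul, mul_add, iha, ihb]

theorem mem_center_of_mem_evenOdd_zero {a : ExteriorAlgebra K M}
    (ha : a ∈ CliffordAlgebra.evenOdd (0 : QuadraticForm K M) 0) :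
    a ∈ Subring.center (ExteriorAlgebra K M) := by
  induction a, ha using CliffordAlgebra.even_induction with
  | algebraMap r => exact Subring.mem_center_iff.2 fun g => (Algebra.commutes r g).symm
  | add _ _ _ _ iha ihb => exact add_mem iha ihb
  | ι_mul_ι_mul v w _ _ ih => exact mul_mem (ι_mul_ι_mem_center v w) ih

theorem mul_mem_center_of_mem_evenOdd_one {a b : ExteriorAlgebra K M}
    (ha : a ∈ CliffordAlgebra.evenOdd (0 : QuadraticForm K M) 1)
    (hb : b ∈ CliffordAlgebra.evenOdd (0 : QuadraticForm K M) 1) :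
    a * b ∈ Subring.center (ExteriorAlgebra K M) :=
  mem_center_of_mem_evenOdd_zero
    (CliffordAlgebra.evenOdd_mul_le _ 1 1 (Submodule.mul_mem_mul ha hb))

theorem isNilpotent_ι_mul_ι (v w : M) : IsNilpotent (ι K v * ι K w) := by
  refine ⟨2, ?_⟩
  calc (ι K v * ι K w) ^ 2 = ι K v * (ι K w * (ι K v * ι K w)) := by rw [pow_two, mul_assoc]
    _ = ι K v * ι K v * (ι K w * ι K w) := by
      rw [Subring.mem_center_iff.1 (ι_mul_ι_mem_center v w)]
      simp only [mul_assoc]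
    _ = 0 := by rw [ι_sq_zero, zero_mul]

theorem isNilpotent_ι_mul_of_mem_evenOdd_one (v : M) {b : ExteriorAlgebra K M}
    (hb : b ∈ CliffordAlgebra.evenOdd (0 : QuadraticForm K M) 1) :
    IsNilpotent (ι K v * b) := by
  induction b, hb using CliffordAlgebra.odd_induction with
  | ι w => exact isNilpotent_ι_mul_ι v w
  | add b c _ hc ihb ihc =>
    rw [mul_add]
    have hcenter := mul_mem_center_of_mem_evenOdd_one (CliffordAlgebra.ι_mem_evenOdd_one _ v) hc
    exact Commute.isNilpotent_add (Subring.mem_center_iff.1 hcenter _) ihb ihc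
  | ι_mul_ι_mul u w b _ ih =>
    have hcomm := Subring.mem_center_iff.1 (ι_mul_ι_mem_center (K := K) u w)
    have hmove : ι K v * (ι K u * ι K w * b) = ι K v * b * (ι K u * ι K w) := by
      rw [← hcomm b, mul_assoc]
    exact hmove ▸ Commute.isNilpotent_mul_right (hcomm _) ih

theorem isNilpotent_mul_of_mem_evenOdd_one {a b : ExteriorAlgebra K M}
    (ha : a ∈ CliffordAlgebra.evenOdd (0 : QuadraticForm K M) 1)
    (hb : b ∈ CliffordAlgebra.evenOdd (0 : QuadraticForm K M) 1) : IsNilpotent (a * b) := by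
  induction a, ha using CliffordAlgebra.odd_induction with
  | ι v => exact isNilpotent_ι_mul_of_mem_evenOdd_one v hb
  | add a c _ hc iha ihc =>
    rw [add_mul]
    have hcenter := mul_mem_center_of_mem_evenOdd_one hc hb
    exact Commute.isNilpotent_add (Subring.mem_center_iff.1 hcenter _) iha ihc
  | ι_mul_ι_mul u w a _ ih =>
    rw [mul_assoc]
    have hcomm := Subring.mem_center_iff.1 (ι_mul_ι_mem_center (K := K) u w)
    exact Commute.isNilpotent_mul_left (hcomm (a * b)).symm ih

end ExteriorAlgebra

theorem IsEvenSupermatrix.isEvenBlockMatrix {n k l : ℕ}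
    {A : Matrix (Fin (k + l)) (Fin (k + l)) (SuperAlg n)} (hA : IsEvenSupermatrix n k l A) :
    IsEvenBlockMatrix (A.submatrix (finSumFinEquiv (m := k) (n := l)) finSumFinEquiv) where
  toBlocks₁₁_mem_center i j := mem_center_of_mem_evenOdd_zero (hA.1 i j)
  toBlocks₂₂_mem_center i j := mem_center_of_mem_evenOdd_zero (hA.2.1 i j)
  mul_mem_center i r q j := mul_mem_center_of_mem_evenOdd_one (hA.2.2.1 i r) (hA.2.2.2 q j)
  isNilpotent_mul i r q j := isNilpotent_mul_of_mem_evenOdd_one (hA.2.2.1 i r) (hA.2.2.2 q j)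

theorem comp_vecMul_submatrix_equiv {R m n o p : Type*} [NonUnitalNonAssocSemiring R]
    [Fintype m] [Fintype o] (x : m → R) (A : Matrix m n R) (e : o ≃ m) (f : p → n) :
    (x ∘ e) ᵥ* A.submatrix e f = (x ᵥ* A) ∘ f := by
  rw [submatrix_vecMul_equiv, Function.comp_assoc, Equiv.self_comp_symm, Function.comp_id]

theorem ber_eq_berezinian {n k l : ℕ} (A : Matrix (Fin (k + l)) (Fin (k + l)) (SuperAlg n)) :
    ber n k l A = berezinian (A.submatrix finSumFinEquiv finSumFinEquiv) :=
  rfl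

theorem ber_updateRow_castAdd {n k l : ℕ} (A : Matrix (Fin (k + l)) (Fin (k + l)) (SuperAlg n))
    (i : Fin k) (y : Fin (k + l) → SuperAlg n) :
    ber n k l (A.updateRow (Fin.castAdd l i) y) =
      berezinian ((A.submatrix finSumFinEquiv finSumFinEquiv).updateRow (.inl i)
        (y ∘ finSumFinEquiv)) := by
  rw [ber_eq_berezinian, submatrix_updateRow_equiv, finSumFinEquiv_symm_apply_castAdd]
  rfl

/-- **super Cramer's rule, even positions.**  Let `A = [[X, α],[β, Y]]` be an
invertible even `(k+1|l)`-supermatrix over `Λ` (equivalently, `X` and `Y` are both invertible)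
and let `x·A = y` for row vectors `x`, `y`.  Then for every even index `i`:
`x_i·det(X − α·Y⁻¹·β) = Σ_j (y′ − y″·Y⁻¹·β)_j·C_{ij}`, where `C_{ij}` is the `(i,j)`-cofactor
of `X − α·Y⁻¹·β`; equivalently, `x_i = ber(A_i(y))·ber(A)⁻¹`, where `A_i(y)` is obtained by
replacing the `i`-th row of `A` with `y`. -/
theorem statement6 (n k l : ℕ)
    (A : Matrix (Fin ((k + 1) + l)) (Fin ((k + 1) + l)) (SuperAlg n))
    (hA : IsEvenSupermatrix n (k + 1) l A)
    (hX : IsUnit (Xblk n (k + 1) l A)) (hY : IsUnit (Yblk n (k + 1) l A))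
    (x y : Fin ((k + 1) + l) → SuperAlg n)
    (hxy : ∀ j, ∑ p, x p * A p j = y j)
    (i : Fin (k + 1)) :
    x (Fin.castAdd l i) *
        ncdet (Xblk n (k + 1) l A -
          alphaBlk n (k + 1) l A * Ring.inverse (Yblk n (k + 1) l A) * betaBlk n (k + 1) l A)
      = (∑ j : Fin (k + 1),
          (y (Fin.castAdd l j) -
            ∑ r : Fin l, ∑ q : Fin l,
              y (Fin.natAdd (k + 1) r) * Ring.inverse (Yblk n (k + 1) l A) r q *
                betaBlk n (k + 1) l A q j) *
          (((-1 : ℤ) ^ ((i : ℕ) + (j : ℕ))) •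
            ncdet ((Xblk n (k + 1) l A -
              alphaBlk n (k + 1) l A * Ring.inverse (Yblk n (k + 1) l A) *
                betaBlk n (k + 1) l A).submatrix i.succAbove j.succAbove))) ∧
    x (Fin.castAdd l i)
      = ber n (k + 1) l (A.updateRow (Fin.castAdd l i) y) *
          Ring.inverse (ber n (k + 1) l A) := by
  have hxy' : (x ∘ finSumFinEquiv) ᵥ* A.submatrix finSumFinEquiv finSumFinEquiv =
      y ∘ finSumFinEquiv := by
    rw [comp_vecMul_submatrix_equiv, ← funext hxy]
    rfl
  have hcramer := statement6_general hA.isEvenBlockMatrix hX hY hxy' i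
  simp only [reducedRow_apply, ← ber_updateRow_castAdd] at hcramer
  exact hcramer

end
end
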